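/- arXiv:2306.01968 — 2 statements merged into one kernel-verified Lean document; each statement's English description precedes it below -/
import Mathlib

section
/- Maximum load of the static opaque process well before the end of the horizon (Claim 2): Fix S ≥ 2, set T = N(S−1)+1, c_s = 2√6·N(N−1)(N+1)/q + 4N and c_s¹ = 2√6·N²(N−1)/q + 4N, and let T̃ = T − c_s¹·√(T·log T). Consider the balls-into-bins process for horizon T under the static opaque policy, which sets ω(t) = 1 if and only if t ≥ T − c_s·√(T·log T), with flexed flex balls placed in the bin of their flex set with the smallest current load (ties broken in favor of the smallest index). Then there exist a₁ > 0 and S₀ ∈ ℕ, depending only on N and q, such that for all S ≥ S₀: P(max_{1≤j≤N} x_j(T̃) ≥ S) ≤ a₁/T². -/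
/-!
A ball can land in bin `j` only if `j` is its preferred bin (ball not flexed) or `j` belongs to
its flex set (ball flexed). These events do not depend on the loads, so `x_j` is dominated by a
sum of independent indicators (`Touches`, `greedyLoads_le`), with success probability at most
`1 / N` before flexing starts and `(1 + q) / N` afterwards (`sum_touches_le`).

Write `L = √(T log T)`. Before time `T̃` flexing is active for at most `(c_s - c_s¹) L + 1` steps,
so the mean of the dominating sum is at most
`T̃ / N + (q / N) ((c_s - c_s¹) L + 1) ≤ S - 4 L + 1`. The Chernoff bound (`prob_maxLoad_le`) with
tilt `L / T`, together with `exp l - 1 ≤ l + l²` for `0 ≤ l ≤ 1`, then bounds the probability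
that some bin reaches `S` by `N * exp (1 - 3 log T)`, which is more than enough.
-/

attribute [local instance] Classical.propDecidable

/-- An arrival type: (is-flex-ball, preferred bin, flex set). -/
abbrev Arrival (N : ℕ) := Bool × Fin N × Finset (Fin N)

/-- Mass of a single arrival: `f ~ Bernoulli(q)`, `p` uniform on `Fin N`,
`F` uniform on the 2-element subsets of `Fin N`, mutually independent. -/
noncomputable def arrivalProb (N : ℕ) (q : ℝ) (a : Arrival N) : ℝ :=
  (if a.1 then q else 1 - q) * (1 / (N : ℝ)) *
    (if a.2.2.card = 2 then 1 / (N.choose 2 : ℝ) else 0)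

/-- Mass of a sequence of `T` i.i.d. arrivals. -/
noncomputable def seqMass (N T : ℕ) (q : ℝ) (xs : Fin T → Arrival N) : ℝ :=
  ∏ t, arrivalProb N q (xs t)

/-- Expectation of a real random variable on the canonical space of `T` arrivals. -/
noncomputable def expec (N T : ℕ) (q : ℝ) (X : (Fin T → Arrival N) → ℝ) : ℝ :=
  ∑ xs : Fin T → Arrival N, seqMass N T q xs * X xs

/-- Probability of an event on the canonical space of `T` arrivals. -/
noncomputable def prob (N T : ℕ) (q : ℝ) (A : (Fin T → Arrival N) → Prop) : ℝ :=
  ∑ xs : Fin T → Arrival N, if A xs then seqMass N T q xs else 0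

/-- The least-loaded bin in `F` (ties broken in favor of the smallest index). -/
noncomputable def argminBin {N : ℕ} [NeZero N] (x : Fin N → ℕ) (F : Finset (Fin N)) : Fin N :=
  if hF : (F.filter fun i => ∀ j ∈ F, x i ≤ x j).Nonempty
  then (F.filter fun i => ∀ j ∈ F, x i ≤ x j).min' hF
  else 0

/-- One step of the greedy (least-loaded) allocation: if the ball is a flex ball and
flexing is exerted, it goes to the least-loaded bin of its flex set (lexicographic
tie-breaking); otherwise it goes to its preferred bin. -/
noncomputable def greedyStep {N : ℕ} [NeZero N] (flex : Bool) (a : Arrival N)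
    (x : Fin N → ℕ) : Fin N → ℕ :=
  fun i => if i = (if a.1 && flex then argminBin x a.2.2 else a.2.1) then x i + 1 else x i

/-- Load process under a flexing rule `dec` (which may depend on the whole realization,
the time, and the current loads), with greedy placement of flexed flex balls. -/
noncomputable def greedyLoads {N T : ℕ} [NeZero N]
    (dec : (Fin T → Arrival N) → ℕ → (Fin N → ℕ) → Bool)
    (xs : Fin T → Arrival N) : ℕ → Fin N → ℕ
  | 0 => fun _ => 0
  | t + 1 =>
    if h : t < T then
      greedyStep (dec xs t (greedyLoads dec xs t)) (xs ⟨t, h⟩) (greedyLoads dec xs t)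
    else greedyLoads dec xs t

/-- The maximum load over all bins. -/
noncomputable def maxLoad {N : ℕ} (x : Fin N → ℕ) : ℕ := Finset.univ.sup x

/-- `Gap(t)` : maximum load minus the average load `t/N`. -/
noncomputable def gap {N : ℕ} (x : Fin N → ℕ) (t : ℕ) : ℝ :=
  (maxLoad x : ℝ) - (t : ℝ) / (N : ℝ)

/-- Number of flexed balls `M = ∑_t f_t ω(t)`. -/
noncomputable def numFlexed {N T : ℕ} [NeZero N]
    (dec : (Fin T → Arrival N) → ℕ → (Fin N → ℕ) → Bool) (xs : Fin T → Arrival N) : ℕ :=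
  ∑ t : Fin T, if (xs t).1 && dec xs (t : ℕ) (greedyLoads dec xs (t : ℕ)) then 1 else 0

/-- Flexing rule of a "static"-type policy: flex exactly from period
`T - c·√(T log T)` on (ball `t` corresponds to step index `t-1`). -/
noncomputable def lateDec (N T : ℕ) (c : ℝ) :
    (Fin T → Arrival N) → ℕ → (Fin N → ℕ) → Bool :=
  fun _ s _ =>
    if (T : ℝ) - c * Real.sqrt ((T : ℝ) * Real.log (T : ℝ)) ≤ ((s : ℝ) + 1) then true else false

/-- Flexing rule of the dynamic policy: flex at period `t = s+1` iff the current gap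
`Gap(t-1)` is at least `a_d (T - t) q / N` with `a_d = 1/(5 C(N,2))`. -/
noncomputable def dynDec (N T : ℕ) (q : ℝ) :
    (Fin T → Arrival N) → ℕ → (Fin N → ℕ) → Bool :=
  fun _ s x =>
    if (1 / (5 * (N.choose 2 : ℝ))) * ((T : ℝ) - ((s : ℝ) + 1)) * q / (N : ℝ) ≤ gap x s
    then true else false

/-- First time (within horizon `T`) at which the maximum load equals `S`. -/
noncomputable def hitTime {N : ℕ} (T S : ℕ) (x : ℕ → Fin N → ℕ) : ℕ :=
  if h : ((Finset.range (T + 1)).filter fun t => maxLoad (x t) = S).Nonempty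
  then ((Finset.range (T + 1)).filter fun t => maxLoad (x t) = S).min' h
  else T

/-- The dynamic opaque policy: the flag records whether the trigger condition
`Gap(t) ≥ c_d (T-t) q / N` (with `c_d = 1/(10 C(N,2))`) has held at some time `≤ t`;
from then on every flex ball is flexed (greedy placement). Returns (flag, loads). -/
noncomputable def dynOpaque (N T : ℕ) [NeZero N] (q : ℝ) (xs : Fin T → Arrival N) :
    ℕ → Bool × (Fin N → ℕ)
  | 0 =>
    (if (1 / (10 * (N.choose 2 : ℝ))) * (T : ℝ) * q / (N : ℝ) ≤ 0 then true else false,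
      fun _ => 0)
  | t + 1 =>
    let p := dynOpaque N T q xs t
    let x' := if h : t < T then greedyStep p.1 (xs ⟨t, h⟩) p.2 else p.2
    (p.1 ||
      (if (1 / (10 * (N.choose 2 : ℝ))) * ((T : ℝ) - ((t : ℝ) + 1)) * q / (N : ℝ) ≤
          gap x' (t + 1)
       then true else false),
     x')

/-- Number of flexed balls `D = ∑_{t=1}^{R} f_t ω(t)` during one replenishment cycle,
for a policy given by the flexing rule `dec`. -/
noncomputable def cycleFlexCount (N T : ℕ) [NeZero N]
    (dec : (Fin T → Arrival N) → ℕ → (Fin N → ℕ) → Bool) (S : ℕ)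
    (xs : Fin T → Arrival N) : ℕ :=
  ∑ t ∈ Finset.range (hitTime T S (greedyLoads dec xs)),
    if h : t < T then (if (xs ⟨t, h⟩).1 && dec xs t (greedyLoads dec xs t) then 1 else 0)
    else 0

/-- Number of flexed balls during one replenishment cycle of the dynamic opaque policy. -/
noncomputable def dynFlexCount (N T : ℕ) [NeZero N] (q : ℝ) (S : ℕ)
    (xs : Fin T → Arrival N) : ℕ :=
  ∑ t ∈ Finset.range (hitTime T S fun u => (dynOpaque N T q xs u).2),
    if h : t < T then (if (xs ⟨t, h⟩).1 && (dynOpaque N T q xs t).1 then 1 else 0) else 0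

/-- The static-opaque flexing threshold constant `c_s = 2√6 N(N-1)(N+1)/q + 4N`. -/
noncomputable def csOpaque (N : ℕ) (q : ℝ) : ℝ :=
  2 * Real.sqrt 6 * (N : ℝ) * ((N : ℝ) - 1) * ((N : ℝ) + 1) / q + 4 * (N : ℝ)

/-- The constant `c_s¹ = 2√6 N²(N-1)/q + 4N`. -/
noncomputable def cs1Opaque (N : ℕ) (q : ℝ) : ℝ :=
  2 * Real.sqrt 6 * (N : ℝ) ^ 2 * ((N : ℝ) - 1) / q + 4 * (N : ℝ)

/-! ### Domination by independent indicators -/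

/-- A superset of the event that a ball of type `a` lands in bin `j`, given that flexing is
switched on (`b = true`) or off. It does not depend on the loads. The degenerate case
`F.card ≠ 2`, of probability zero, is included so that the inclusion holds for every `a`. -/
def Touches {N : ℕ} (b : Bool) (j : Fin N) (a : Arrival N) : Prop :=
  if a.1 && b then (j ∈ a.2.2 ∨ a.2.2.card ≠ 2) else a.2.1 = j

lemma argminBin_mem {N : ℕ} [NeZero N] (x : Fin N → ℕ) (F : Finset (Fin N))
    (hF : F.Nonempty) : argminBin x F ∈ F := by
  have h : (F.filter fun i => ∀ j ∈ F, x i ≤ x j).Nonempty := by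
    obtain ⟨i, hi, hm⟩ := F.exists_min_image x hF
    exact ⟨i, Finset.mem_filter.2 ⟨hi, hm⟩⟩
  unfold argminBin
  rw [dif_pos h]
  exact (Finset.mem_filter.1 (Finset.min'_mem _ h)).1

lemma greedyStep_le {N : ℕ} [NeZero N] (b : Bool) (a : Arrival N) (x : Fin N → ℕ) (j : Fin N) :
    greedyStep b a x j ≤ x j + if Touches b j a then 1 else 0 := by
  unfold greedyStep
  by_cases hj : j = (if a.1 && b then argminBin x a.2.2 else a.2.1)
  · have : Touches b j a := by
      unfold Touches
      split_ifs at hj ⊢ with h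
      · by_cases hc : a.2.2.card = 2
        · left
          rw [hj]
          exact argminBin_mem x _ (Finset.card_pos.1 (by omega))
        · exact Or.inr hc
      · exact hj.symm
    rw [if_pos hj, if_pos this]
  · rw [if_neg hj]
    exact Nat.le_add_right _ _

lemma greedyLoads_le {N T : ℕ} [NeZero N] (d : ℕ → Bool) (xs : Fin T → Arrival N) (j : Fin N)
    (t : ℕ) :
    greedyLoads (fun _ s _ => d s) xs t j ≤
      ∑ s : Fin T, if (s : ℕ) < t ∧ Touches (d s) j (xs s) then 1 else 0 := by
  induction t with
  | zero => simp [greedyLoads]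
  | succ t ih =>
    rw [greedyLoads]
    split_ifs with h
    · refine (greedyStep_le _ _ _ _).trans ((Nat.add_le_add_right ih _).trans ?_)
      have h1 : (if Touches (d t) j (xs ⟨t, h⟩) then 1 else 0) =
          ∑ s : Fin T, if s = ⟨t, h⟩ then
            (if Touches (d s) j (xs s) then 1 else 0) else 0 := by
        rw [Finset.sum_ite_eq']
        simp
      rw [h1, ← Finset.sum_add_distrib]
      refine Finset.sum_le_sum fun s _ => ?_
      have hs : s = ⟨t, h⟩ ↔ (s : ℕ) = t := by rw [Fin.ext_iff]
      by_cases hC : Touches (d s) j (xs s)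
      · simp only [hC, hs, and_true, if_true]
        split_ifs <;> omega
      · simp [hC]
    · refine ih.trans (Finset.sum_le_sum fun s _ => ?_)
      by_cases hC : Touches (d s) j (xs s)
      · simp only [hC, and_true]
        split_ifs <;> omega
      · simp [hC]

/-! ### The law of a single arrival -/

lemma arrivalProb_nonneg {N : ℕ} {q : ℝ} (hq0 : 0 < q) (hq1 : q ≤ 1) (a : Arrival N) :
    0 ≤ arrivalProb N q a := by
  unfold arrivalProb
  have : 0 ≤ 1 - q := by linarith
  refine mul_nonneg (mul_nonneg ?_ (by positivity)) ?_ <;> split_ifs <;> positivity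

lemma sum_pairs (N : ℕ) (hN : 2 ≤ N) :
    ∑ F : Finset (Fin N), (if F.card = 2 then 1 / (N.choose 2 : ℝ) else 0) = 1 := by
  have hc : (N.choose 2 : ℝ) ≠ 0 := by exact_mod_cast (Nat.choose_pos hN).ne'
  rw [← Finset.sum_filter, Finset.sum_const, nsmul_eq_mul]
  have : (Finset.univ.filter fun F : Finset (Fin N) => F.card = 2) =
      Finset.powersetCard 2 Finset.univ := by
    ext F; simp [Finset.mem_powersetCard]
  rw [this, Finset.card_powersetCard, Finset.card_univ, Fintype.card_fin]
  field_simp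

/-- A bin belongs to the uniform random pair with probability at most `2 / N`. -/
lemma sum_pairs_mem (N : ℕ) (hN : 2 ≤ N) (j : Fin N) :
    ∑ F : Finset (Fin N), (if F.card = 2 then 1 / (N.choose 2 : ℝ) else 0) *
      (if j ∈ F ∨ F.card ≠ 2 then 1 else 0) ≤ 2 / (N : ℝ) := by
  have hN' : (2 : ℝ) ≤ N := by exact_mod_cast hN
  have h1 : ∀ F : Finset (Fin N), (if F.card = 2 then 1 / (N.choose 2 : ℝ) else 0) *
      (if j ∈ F ∨ F.card ≠ 2 then (1 : ℝ) else 0) =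
      if F.card = 2 ∧ j ∈ F then 1 / (N.choose 2 : ℝ) else 0 := by
    intro F
    by_cases h : F.card = 2 <;> by_cases h' : j ∈ F <;> simp [h, h']
  rw [Finset.sum_congr rfl fun F _ => h1 F, ← Finset.sum_filter, Finset.sum_const, nsmul_eq_mul]
  have hcard : (Finset.univ.filter fun F : Finset (Fin N) => F.card = 2 ∧ j ∈ F).card ≤ N - 1 := by
    have hsub : (Finset.univ.filter fun F : Finset (Fin N) => F.card = 2 ∧ j ∈ F) ⊆
        (Finset.univ.erase j).image fun i => ({i, j} : Finset (Fin N)) := by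
      intro F hF
      obtain ⟨-, h2, hj⟩ := Finset.mem_filter.1 hF
      obtain ⟨a, b, hab, rfl⟩ := Finset.card_eq_two.1 h2
      rw [Finset.mem_image]
      rcases Finset.mem_insert.1 hj with rfl | hb
      · exact ⟨b, by simp [hab.symm], Finset.pair_comm _ _⟩
      · rw [Finset.mem_singleton] at hb
        subst hb
        exact ⟨a, by simp [hab], rfl⟩
    refine (Finset.card_le_card hsub).trans (Finset.card_image_le.trans ?_)
    simp
  have hcard' : ((Finset.univ.filter fun F : Finset (Fin N) => F.card = 2 ∧ j ∈ F).card : ℝ) ≤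
      (N : ℝ) - 1 := by
    have : (1 : ℕ) ≤ N := by omega
    calc _ ≤ ((N - 1 : ℕ) : ℝ) := by exact_mod_cast hcard
      _ = _ := by push_cast [this]; ring
  refine (mul_le_mul_of_nonneg_right hcard' (by positivity)).trans (le_of_eq ?_)
  rw [Nat.cast_choose_two]
  have : (N : ℝ) - 1 ≠ 0 := by linarith
  field_simp

lemma sum_arrivalProb (N : ℕ) [NeZero N] (hN : 2 ≤ N) (q : ℝ) :
    ∑ a : Arrival N, arrivalProb N q a = 1 := by
  have hN0 : (N : ℝ) ≠ 0 := by exact_mod_cast NeZero.ne N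
  simp only [arrivalProb, Fintype.sum_prod_type, Fintype.sum_bool, Bool.false_eq_true,
    if_false, if_true]
  simp only [← Finset.mul_sum, sum_pairs N hN]
  simp
  field_simp
  ring

/-- With flexing off the probability is `1 / N`; with flexing on it is at most
`(1 - q) / N + q * (2 / N)`. -/
lemma sum_touches_le (N : ℕ) [NeZero N] (hN : 2 ≤ N) {q : ℝ} (hq0 : 0 < q)
    (b : Bool) (j : Fin N) :
    ∑ a : Arrival N, arrivalProb N q a * (if Touches b j a then 1 else 0) ≤
      1 / (N : ℝ) + (q / N) * (if b then 1 else 0) := by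
  have hN0 : (N : ℝ) ≠ 0 := by exact_mod_cast NeZero.ne N
  have hp := sum_pairs N hN
  have hpref : ∀ c : ℝ, ∑ p : Fin N, ∑ F : Finset (Fin N),
      c * (1 / (N : ℝ)) * (if F.card = 2 then 1 / (N.choose 2 : ℝ) else 0) *
        (if p = j then 1 else 0) = c / N := by
    intro c
    simp only [← Finset.sum_mul, ← Finset.mul_sum, hp]
    simp
    field_simp
  have hflex : ∑ p : Fin N, ∑ F : Finset (Fin N),
      q * (1 / (N : ℝ)) * (if F.card = 2 then 1 / (N.choose 2 : ℝ) else 0) *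
        (if j ∈ F ∨ F.card ≠ 2 then 1 else 0) ≤ q * (2 / N) := by
    simp only [mul_assoc, ← Finset.mul_sum]
    have := sum_pairs_mem N hN j
    rw [Finset.sum_const, Finset.card_univ, Fintype.card_fin, nsmul_eq_mul]
    have h2 : ∀ X : ℝ, q * (1 / (N : ℝ) * (N * X)) = q * X := by intro X; field_simp
    rw [h2]
    exact mul_le_mul_of_nonneg_left this hq0.le
  simp only [arrivalProb, Fintype.sum_prod_type, Touches, Fintype.sum_bool]
  cases b
  · simp only [Bool.and_false, Bool.false_eq_true, if_false, if_true]
    rw [hpref, hpref]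
    apply le_of_eq
    field_simp
    ring
  · simp only [Bool.and_true, Bool.false_eq_true, if_false, if_true]
    rw [hpref]
    refine (add_le_add_left hflex _).trans (le_of_eq ?_)
    field_simp
    ring

/-! ### Exponential moments -/

lemma prob_le_of_forall {N T : ℕ} {q : ℝ} (hq0 : 0 < q) (hq1 : q ≤ 1)
    {A : (Fin T → Arrival N) → Prop} {X : (Fin T → Arrival N) → ℝ}
    (hX : ∀ xs, 0 ≤ X xs) (h : ∀ xs, A xs → 1 ≤ X xs) :
    prob N T q A ≤ expec N T q X := by
  unfold prob expec
  refine Finset.sum_le_sum fun xs _ => ?_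
  have h0 : 0 ≤ seqMass N T q xs :=
    Finset.prod_nonneg fun t _ => arrivalProb_nonneg hq0 hq1 _
  split_ifs with hA
  · exact le_mul_of_one_le_right h0 (h xs hA)
  · exact mul_nonneg h0 (hX xs)

/-- Independence of the arrivals. -/
lemma expec_prod {N T : ℕ} {q : ℝ} (g : Fin T → Arrival N → ℝ) :
    expec N T q (fun xs => ∏ t, g t (xs t)) = ∏ t, ∑ a, arrivalProb N q a * g t a := by
  unfold expec seqMass
  rw [Finset.prod_univ_sum, Fintype.piFinset_univ]
  exact Finset.sum_congr rfl fun xs _ => Finset.prod_mul_distrib.symm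

lemma expec_exp_le {N T : ℕ} [NeZero N] (hN : 2 ≤ N) {q : ℝ} (hq0 : 0 < q) (hq1 : q ≤ 1)
    (d : ℕ → Bool) (j : Fin N) (m : ℕ) {l : ℝ} (hl : 0 ≤ l) :
    expec N T q (fun xs => ∏ s : Fin T,
      Real.exp (l * if (s : ℕ) < m ∧ Touches (d s) j (xs s) then 1 else 0)) ≤
    Real.exp ((Real.exp l - 1) * ∑ s : Fin T,
      if (s : ℕ) < m then (1 / (N : ℝ) + (q / N) * (if d s then 1 else 0)) else 0) := by
  rw [expec_prod (fun (s : Fin T) a =>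
    Real.exp (l * if (s : ℕ) < m ∧ Touches (d s) j a then 1 else 0)), Finset.mul_sum,
    Real.exp_sum]
  refine Finset.prod_le_prod (fun s _ => Finset.sum_nonneg fun a _ =>
    mul_nonneg (arrivalProb_nonneg hq0 hq1 a) (Real.exp_pos _).le) fun s _ => ?_
  by_cases hs : (s : ℕ) < m
  · simp only [hs, true_and, if_true]
    have h1 : ∀ a : Arrival N, arrivalProb N q a *
        Real.exp (l * if Touches (d s) j a then 1 else 0) = arrivalProb N q a +
        (Real.exp l - 1) * (arrivalProb N q a * (if Touches (d s) j a then 1 else 0)) := by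
      intro a
      split_ifs <;> simp
      ring
    rw [Finset.sum_congr rfl fun a _ => h1 a, Finset.sum_add_distrib, ← Finset.mul_sum,
      sum_arrivalProb N hN]
    have h2 := mul_le_mul_of_nonneg_left (sum_touches_le N hN hq0 (d s) j)
      (sub_nonneg.2 (Real.one_le_exp hl))
    have h3 := Real.add_one_le_exp
      ((Real.exp l - 1) * (1 / (N : ℝ) + (q / N) * (if d s then 1 else 0)))
    linarith
  · simp [hs, sum_arrivalProb N hN]

/-- Chernoff bound for the maximum load, with a union bound over the `N` bins. -/
lemma prob_maxLoad_le {N T : ℕ} [NeZero N] (hN : 2 ≤ N) {q : ℝ} (hq0 : 0 < q) (hq1 : q ≤ 1)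
    (d : ℕ → Bool) (m S : ℕ) (hS : 1 ≤ S) {l : ℝ} (hl : 0 ≤ l) :
    prob N T q (fun xs => S ≤ maxLoad (greedyLoads (fun _ s _ => d s) xs m)) ≤
    N * Real.exp ((Real.exp l - 1) * (∑ s : Fin T,
      if (s : ℕ) < m then (1 / (N : ℝ) + (q / N) * (if d s then 1 else 0)) else 0) - l * S) := by
  have key : prob N T q (fun xs => S ≤ maxLoad (greedyLoads (fun _ s _ => d s) xs m)) ≤
      expec N T q (fun xs => ∑ j : Fin N, Real.exp (- (l * S)) * ∏ s : Fin T,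
      Real.exp (l * if (s : ℕ) < m ∧ Touches (d s) j (xs s) then 1 else 0)) := by
    refine prob_le_of_forall hq0 hq1 (fun xs => Finset.sum_nonneg fun j _ => by positivity) ?_
    intro xs hxs
    have hj : ∃ j, S ≤ greedyLoads (fun _ s _ => d s) xs m j := by
      by_contra! hcon
      have : maxLoad (greedyLoads (fun _ s _ => d s) xs m) < S :=
        (Finset.sup_lt_iff (by simpa [Nat.pos_iff_ne_zero, Nat.one_le_iff_ne_zero] using hS)).2 fun j _ => hcon j
      omega
    obtain ⟨j, hj⟩ := hj
    have hle : (S : ℝ) ≤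
        ∑ s : Fin T, if (s : ℕ) < m ∧ Touches (d s) j (xs s) then (1 : ℝ) else 0 := by
      exact_mod_cast hj.trans (greedyLoads_le d xs j m)
    refine le_trans ?_ (Finset.single_le_sum (f := fun j : Fin N => Real.exp (- (l * S)) *
      ∏ s : Fin T, Real.exp (l * if (s : ℕ) < m ∧ Touches (d s) j (xs s) then 1 else 0))
      (fun j _ => by positivity) (Finset.mem_univ j))
    rw [← Real.exp_sum, ← Finset.mul_sum, ← Real.exp_add]
    have := mul_le_mul_of_nonneg_left hle hl
    exact Real.one_le_exp (by linarith)
  refine key.trans ?_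
  have hlin : expec N T q (fun xs => ∑ j : Fin N, Real.exp (- (l * S)) * ∏ s : Fin T,
      Real.exp (l * if (s : ℕ) < m ∧ Touches (d s) j (xs s) then 1 else 0)) =
      ∑ j : Fin N, Real.exp (- (l * S)) * expec N T q (fun xs => ∏ s : Fin T,
      Real.exp (l * if (s : ℕ) < m ∧ Touches (d s) j (xs s) then 1 else 0)) := by
    unfold expec
    simp only [Finset.mul_sum]
    rw [Finset.sum_comm]
    exact Finset.sum_congr rfl fun j _ => Finset.sum_congr rfl fun xs _ => by ring
  rw [hlin]
  refine (Finset.sum_le_sum fun j _ => mul_le_mul_of_nonneg_left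
    (expec_exp_le hN hq0 hq1 d j m hl) (Real.exp_pos _).le).trans (le_of_eq ?_)
  rw [Finset.sum_const, Finset.card_univ, Fintype.card_fin, nsmul_eq_mul, ← Real.exp_add]
  ring_nf

/-! ### The mean of the dominating sum -/

lemma card_late_le (m : ℕ) (a D : ℝ) (hD : 0 ≤ D) (hm : (m : ℝ) ≤ a + D) :
    (((Finset.range m).filter fun s : ℕ => a ≤ (s : ℝ) + 1).card : ℝ) ≤ D + 1 := by
  have hsub : ((Finset.range m).filter fun s : ℕ => a ≤ (s : ℝ) + 1) ⊆
      Finset.Ico (⌈a⌉₊ - 1) m := by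
    intro s hs
    obtain ⟨h1, h2⟩ := Finset.mem_filter.1 hs
    have h3 : ⌈a⌉₊ ≤ s + 1 := Nat.ceil_le.2 (by push_cast; exact h2)
    exact Finset.mem_Ico.2 ⟨by omega, Finset.mem_range.1 h1⟩
  have h1 := Finset.card_le_card hsub
  rw [Nat.card_Ico] at h1
  have h2 : (((Finset.range m).filter fun s : ℕ => a ≤ (s : ℝ) + 1).card : ℝ) ≤
      ((m - (⌈a⌉₊ - 1) : ℕ) : ℝ) := by exact_mod_cast h1
  refine h2.trans ?_
  rcases le_total m (⌈a⌉₊ - 1) with h | h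
  · rw [Nat.sub_eq_zero_of_le h]
    simp
    linarith
  · rw [Nat.cast_sub h]
    have h3 : (⌈a⌉₊ : ℝ) ≤ ((⌈a⌉₊ - 1 : ℕ) : ℝ) + 1 := by
      exact_mod_cast (by omega : ⌈a⌉₊ ≤ ⌈a⌉₊ - 1 + 1)
    have := Nat.le_ceil a
    linarith

lemma sum_rates_le {N T m : ℕ} (hm : m ≤ T) (q : ℝ) (hq0 : 0 < q) (a D : ℝ)
    (hD : 0 ≤ D) (hmD : (m : ℝ) ≤ a + D) :
    (∑ s : Fin T, if (s : ℕ) < m then (1 / (N : ℝ) + (q / N) *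
      (if (if a ≤ ((s : ℕ) : ℝ) + 1 then true else false) = true then 1 else 0)) else 0) ≤
      m / N + q / N * (D + 1) := by
  rw [Fin.sum_univ_eq_sum_range (fun s : ℕ => if s < m then (1 / (N : ℝ) + (q / N) *
      (if (if a ≤ (s : ℝ) + 1 then true else false) = true then 1 else 0)) else 0) T,
    ← Finset.sum_filter]
  have hf : (Finset.range T).filter (fun s => s < m) = Finset.range m := by
    ext s
    simp only [Finset.mem_filter, Finset.mem_range]
    omega
  rw [hf, Finset.sum_add_distrib, ← Finset.mul_sum]
  have hc : (∑ s ∈ Finset.range m,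
      (if (if a ≤ (s : ℝ) + 1 then true else false) = true then (1 : ℝ) else 0)) ≤ D + 1 := by
    refine le_trans (le_of_eq ?_) (card_late_le m a D hD hmD)
    rw [Finset.card_filter]
    push_cast
    exact Finset.sum_congr rfl fun s _ => by split_ifs <;> simp_all
  refine add_le_add (le_of_eq ?_) (mul_le_mul_of_nonneg_left hc (by positivity))
  rw [Finset.sum_const, Finset.card_range, nsmul_eq_mul]
  ring

/-- **Claim 2** (maximum load of the static opaque process well before the end of the
horizon): with `T = N(S-1)+1` and `T̃ = T - c_s¹ √(T log T)`, under the static opaque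
policy `P(max_j x_j(T̃) ≥ S) ≤ a₁ / T²` for all large enough `S`, where `a₁ > 0` and the
threshold `S₀` depend only on `N` and `q`. -/
theorem static_opaque_maxload_early (N : ℕ) [NeZero N] (hN : 2 ≤ N) (q : ℝ)
    (hq0 : 0 < q) (hq1 : q ≤ 1) :
    ∃ a₁ : ℝ, 0 < a₁ ∧ ∃ S₀ : ℕ, ∀ S : ℕ, S₀ ≤ S →
      prob N (N * (S - 1) + 1) q (fun xs =>
          S ≤ maxLoad (greedyLoads (lateDec N (N * (S - 1) + 1) (csOpaque N q)) xs
            (⌊((N * (S - 1) + 1 : ℕ) : ℝ) -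
                cs1Opaque N q *
                  Real.sqrt (((N * (S - 1) + 1 : ℕ) : ℝ) *
                    Real.log ((N * (S - 1) + 1 : ℕ) : ℝ))⌋₊)))
        ≤ a₁ / ((N * (S - 1) + 1 : ℕ) : ℝ) ^ 2 := by
  refine ⟨N * Real.exp 1, by positivity, 1, fun S hS => ?_⟩
  have hNr : (2 : ℝ) ≤ N := by exact_mod_cast hN
  have hN0 : (0 : ℝ) < N := by linarith
  have hTS : ((N * (S - 1) + 1 : ℕ) : ℝ) ≤ N * S := by
    exact_mod_cast (by
      obtain ⟨k, rfl⟩ : ∃ k, S = k + 1 := ⟨S - 1, by omega⟩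
      rw [Nat.add_sub_cancel, Nat.mul_succ]
      omega : N * (S - 1) + 1 ≤ N * S)
  generalize hT : N * (S - 1) + 1 = T at hTS ⊢
  have hT1 : (1 : ℝ) ≤ T := by
    exact_mod_cast (by omega : 1 ≤ T)
  have hT0 : (0 : ℝ) < T := by linarith
  have hlog : 0 ≤ Real.log T := Real.log_nonneg hT1
  set L := Real.sqrt ((T : ℝ) * Real.log T) with hL
  have hL0 : 0 ≤ L := Real.sqrt_nonneg _
  have hLsq : L * L = T * Real.log T := Real.mul_self_sqrt (by positivity)
  set K := 2 * Real.sqrt 6 * (N : ℝ) * ((N : ℝ) - 1) / q with hK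
  have hK0 : 0 ≤ K := by
    have : 0 ≤ (N : ℝ) - 1 := by linarith
    positivity
  have hcs : csOpaque N q = K * (N + 1) + 4 * N := by
    unfold csOpaque; rw [hK]; ring
  have hcs1 : cs1Opaque N q = K * N + 4 * N := by
    unfold cs1Opaque; rw [hK]; ring
  set m := ⌊(T : ℝ) - cs1Opaque N q * L⌋₊ with hm
  have hcs1L : 0 ≤ cs1Opaque N q * L := by
    rw [hcs1]; positivity
  have hmT : m ≤ T := by
    have : m ≤ ⌊(T : ℝ)⌋₊ := Nat.floor_mono (by linarith)
    simpa using this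
  have hmTr : (m : ℝ) ≤ T := by exact_mod_cast hmT
  -- The floor of a negative real is `0`, so a negative `T̃` is the empty process.
  rcases lt_or_ge ((T : ℝ) - cs1Opaque N q * L) 0 with hneg | hpos
  · have hm0 : m = 0 := Nat.floor_of_nonpos hneg.le
    have : prob N T q (fun xs =>
        S ≤ maxLoad (greedyLoads (lateDec N T (csOpaque N q)) xs m)) = 0 := by
      unfold prob
      refine Finset.sum_eq_zero fun xs _ => if_neg ?_
      rw [hm0]
      simp only [greedyLoads, maxLoad]
      have : (Finset.univ.sup fun _ : Fin N => 0) = 0 := by simp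
      omega
    rw [this]
    positivity
  have hmle : (m : ℝ) ≤ (T : ℝ) - cs1Opaque N q * L := Nat.floor_le hpos
  -- The tilt `l = L / T` gives `l * L = T * l ^ 2 = log T`.
  set l := L / T with hl
  have hl0 : 0 ≤ l := by positivity
  have hlL : l * L = Real.log T := by
    rw [hl, div_mul_eq_mul_div, hLsq]; field_simp
  have hTl : T * l ^ 2 = Real.log T := by
    rw [← hlL, hl]; field_simp
  have hl1 : l ≤ 1 := by
    rw [hl, div_le_one hT0]
    have := Real.log_le_self hT0.le
    nlinarith
  have hexp : Real.exp l - 1 ≤ l + l ^ 2 := by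
    have := Real.abs_exp_sub_one_sub_id_le (x := l) (by rwa [abs_of_nonneg hl0])
    linarith [le_abs_self (Real.exp l - 1 - l)]
  have hch := prob_maxLoad_le (T := T) hN hq0 hq1
    (fun s => if (T : ℝ) - csOpaque N q * L ≤ (s : ℝ) + 1 then true else false) m S hS hl0
  have hrate := sum_rates_le (N := N) hmT q hq0 ((T : ℝ) - csOpaque N q * L) (K * L)
    (by positivity) (by rw [hcs]; rw [hcs1] at hmle; linarith)
  set M := ∑ s : Fin T, (if (s : ℕ) < m then (1 / (N : ℝ) + (q / N) *
      (if (if (T : ℝ) - csOpaque N q * L ≤ ((s : ℕ) : ℝ) + 1 then true else false) = true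
        then 1 else 0)) else 0) with hM
  have hM0 : 0 ≤ M := Finset.sum_nonneg fun s _ => by split_ifs <;> positivity
  have hMT : M ≤ T := by
    have : M ≤ ∑ s : Fin T, (1 : ℝ) := by
      refine Finset.sum_le_sum fun s _ => ?_
      have h1 : 1 / (N : ℝ) ≤ 1 / 2 := one_div_le_one_div_of_le (by norm_num) hNr
      have h2 : q / N ≤ 1 / 2 := by
        rw [div_le_div_iff₀ hN0 (by norm_num)]; linarith
      split_ifs <;> linarith
    simpa using this
  have hMS : M - S ≤ - 4 * L + 1 := by
    have h1 : (m : ℝ) / N ≤ S - (K + 4) * L := by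
      rw [div_le_iff₀ hN0]
      rw [hcs1] at hmle
      linarith
    have h2 : q / N ≤ 1 := by
      rw [div_le_one hN0]; linarith
    have h3 : q / N * (K * L + 1) ≤ K * L + 1 :=
      mul_le_of_le_one_left (by positivity) h2
    linarith
  have hbound : (Real.exp l - 1) * M - l * S ≤ 1 - 3 * Real.log T := by
    have h1 := mul_le_mul_of_nonneg_right hexp hM0
    have h2 := mul_le_mul_of_nonneg_left hMS hl0
    have h3 := mul_le_mul_of_nonneg_left hMT (sq_nonneg l)
    linarith
  refine le_trans hch ?_
  refine (mul_le_mul_of_nonneg_left (Real.exp_le_exp.2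
    (hbound.trans (by linarith : _ ≤ 1 - 2 * Real.log T))) hN0.le).trans (le_of_eq ?_)
  have h2 : Real.exp (2 * Real.log T) = (T : ℝ) ^ 2 := by
    rw [two_mul, Real.exp_add, Real.exp_log hT0, sq]
  rw [Real.exp_sub, h2, mul_div_assoc]
end

section
/- Componentwise monotonicity of greedy least-loaded allocation (inequality (fic_bin) in the proof of Claim 3): Consider the deterministic one-step update: given a load vector z ∈ ℤ_{≥0}^N and an arrival of type (f, p, F) with f ∈ {0,1}, p ∈ {1,…,N} and F a 2-element subset of {1,…,N}, the ball is placed in the bin of F with the smallest load in z (ties broken in favor of the smaller index) if f = 1, and in bin p if f = 0, and that bin's load increases by 1. If x, y ∈ ℤ_{≥0}^N satisfy x_k ≤ y_k for every k ∈ {1,…,N}, then after applying the same arrival (f, p, F) to both vectors, the updated vectors x′, y′ satisfy x′_k ≤ y′_k for every k. Consequently, if two load configurations with x dominated componentwise by y evolve under the same sequence of arrivals (all applying this update), the componentwise domination x_k(t) ≤ y_k(t) holds at every subsequent time t. -/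
/-!
One greedy step can break the domination `x ≤ y` only at the bin `i` that receives the ball
under `x`, and only if `x i = y i` while `y` sends the ball to another bin `j` of the flex set.
But then `y j ≤ y i = x i ≤ x j ≤ y j`, so `i` and `j` are both minimizers for both vectors,
and the common tie-breaking rule forces `i = j` (`argminBin_eq_of_tight`). Domination along a
sequence of arrivals follows by induction on time.
-/

attribute [local instance] Classical.propDecidable

/-- Iterated greedy allocation: starting from loads `x0`, apply the greedy least-loaded
update (flex balls placed greedily, non-flex balls in their preferred bins) with the
arrival sequence `as`. -/
noncomputable def greedySeq {N : ℕ} [NeZero N] (as : ℕ → Arrival N)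
    (x0 : Fin N → ℕ) : ℕ → Fin N → ℕ
  | 0 => x0
  | n + 1 => greedyStep true (as n) (greedySeq as x0 n)

/-- On a nonempty set the fallback value of `argminBin` is not used: the chosen bin is a
minimizer of the load, and the smallest-index one. -/
lemma argminBin_spec {N : ℕ} [NeZero N] (x : Fin N → ℕ) {F : Finset (Fin N)}
    (hF : F.Nonempty) :
    argminBin x F ∈ F ∧ (∀ j ∈ F, x (argminBin x F) ≤ x j) ∧
      ∀ i ∈ F, (∀ j ∈ F, x i ≤ x j) → argminBin x F ≤ i := by
  have hne : (F.filter fun i => ∀ j ∈ F, x i ≤ x j).Nonempty := by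
    obtain ⟨i, hi, h⟩ := F.exists_min_image x hF
    exact ⟨i, Finset.mem_filter.2 ⟨hi, h⟩⟩
  have heq : argminBin x F = (F.filter fun i => ∀ j ∈ F, x i ≤ x j).min' hne := by
    unfold argminBin
    exact dif_pos hne
  have hmem := Finset.mem_filter.1 (Finset.min'_mem _ hne)
  rw [heq]
  exact ⟨hmem.1, hmem.2, fun i hi h => Finset.min'_le _ _ (Finset.mem_filter.2 ⟨hi, h⟩)⟩

/-- If domination is tight at the bin chosen for the smaller vector, then both vectors
choose the same bin; this is where the common tie-breaking rule enters. -/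
lemma argminBin_eq_of_tight {N : ℕ} [NeZero N] {x y : Fin N → ℕ} (hxy : ∀ k, x k ≤ y k)
    {F : Finset (Fin N)} (hF : F.Nonempty)
    (h : x (argminBin x F) = y (argminBin x F)) : argminBin x F = argminBin y F := by
  obtain ⟨hxm, hx, hxmin⟩ := argminBin_spec x hF
  obtain ⟨hym, hy, hymin⟩ := argminBin_spec y hF
  apply le_antisymm
  · refine hxmin _ hym fun j hj => ?_
    have h1 := hxy (argminBin y F)
    have h2 := hy _ hxm
    have h3 := hx j hj
    omega
  · refine hymin _ hxm fun j hj => ?_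
    have h1 := hx j hj
    have h2 := hxy j
    omega

lemma greedyStep_mono {N : ℕ} [NeZero N] {x y : Fin N → ℕ} (hxy : ∀ k, x k ≤ y k)
    (a : Arrival N) (ha : a.2.2.Nonempty) (k : Fin N) :
    greedyStep true a x k ≤ greedyStep true a y k := by
  have hk := hxy k
  unfold greedyStep
  cases hf : a.1
  · simp only [Bool.false_and, Bool.false_eq_true, if_false]
    split_ifs <;> omega
  · simp only [Bool.true_and, if_true]
    by_cases h1 : k = argminBin x a.2.2
    · by_cases h2 : k = argminBin y a.2.2
      · rw [if_pos h1, if_pos h2]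
        omega
      · rw [if_pos h1, if_neg h2]
        refine lt_of_le_of_ne hk fun he => h2 ?_
        rw [h1] at he
        exact h1.trans (argminBin_eq_of_tight hxy ha he)
    · rw [if_neg h1]
      split_ifs <;> omega

/-- **Componentwise monotonicity of greedy least-loaded allocation** (inequality
(fic_bin) in the proof of Claim 3): a single greedy update applied to componentwise
dominated load vectors preserves the domination; consequently domination is
preserved at all times along any common sequence of arrivals. -/
theorem greedy_step_monotone (N : ℕ) [NeZero N] (hN : 2 ≤ N) :
    (∀ x y : Fin N → ℕ, (∀ k, x k ≤ y k) →
      ∀ a : Arrival N, a.2.2.card = 2 →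
        ∀ k, greedyStep true a x k ≤ greedyStep true a y k) ∧
    (∀ x y : Fin N → ℕ, (∀ k, x k ≤ y k) →
      ∀ as : ℕ → Arrival N, (∀ n, (as n).2.2.card = 2) →
        ∀ t k, greedySeq as x t k ≤ greedySeq as y t k) := by
  have hne : ∀ a : Arrival N, a.2.2.card = 2 → a.2.2.Nonempty := fun a ha =>
    Finset.card_pos.1 (by omega)
  refine ⟨fun x y hxy a ha => greedyStep_mono hxy a (hne a ha), ?_⟩
  intro x y hxy as has t
  induction t with
  | zero => exact hxy
  | succ n ih => exact greedyStep_mono ih (as n) (hne _ (has n))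
end
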